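/- Let F : ℝ → ℝ be differentiable and bounded from below. Suppose there exist constants C₃ > 0, C₄ ≥ 0 and an exponent r ∈ (1,2] such that |F'(s)|^r ≤ C₃ |F(s)| + C₄ for all s ∈ ℝ. Then, writing r' = r/(r−1) ∈ [2,∞) for the conjugate exponent of r, there exist constants C₅ > 0 and C₆ ≥ 0 such that |F(s)| ≤ C₅ |s|^{r'} + C₆ for all s ∈ ℝ. -/

import Mathlib

/-!
Along a segment `γ` of length `ℓ`, the growth condition with `K = C₃ + C₄` bounds the speed of
`F ∘ γ` by `K ^ (1 / r) * ℓ * (‖F ∘ γ‖ + 1) ^ (1 / r)`. The barrier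
`t ↦ (c + K ^ (1 / r) * ℓ * t) ^ r' - 1` with `c = (‖F (γ 0)‖ + 1) ^ (1 / r')` starts at
`‖F (γ 0)‖` and grows strictly faster wherever it equals `‖F ∘ γ‖`, because `r' > 1`;
hence it is never crossed.
-/

open Set

variable {E V : Type*} [NormedAddCommGroup E] [NormedSpace ℝ E]
  [NormedAddCommGroup V] [NormedSpace ℝ V]

theorem add_rpow_le_two_rpow_mul_rpow_add_rpow {a b p : ℝ} (ha : 0 ≤ a) (hb : 0 ≤ b)
    (hp : 1 ≤ p) : (a + b) ^ p ≤ 2 ^ (p - 1) * (a ^ p + b ^ p) := by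
  lift a to NNReal using ha
  lift b to NNReal using hb
  exact_mod_cast NNReal.rpow_add_le_mul_rpow_add_rpow a b hp

theorem norm_add_const_le_rpow_of_norm_deriv_right_le {p q : ℝ} (hpq : p.HolderConjugate q)
    {f f' : ℝ → V} {a b C δ : ℝ} (hC : 0 < C) (hδ : 0 < δ) (hf : ContinuousOn f (Icc a b))
    (hf' : ∀ t ∈ Ico a b, HasDerivWithinAt f (f' t) (Ici t) t)
    (bound : ∀ t ∈ Ico a b, ‖f' t‖ ≤ C * (‖f t‖ + δ) ^ p⁻¹) {t : ℝ} (ht : t ∈ Icc a b) :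
    ‖f t‖ + δ ≤ ((‖f a‖ + δ) ^ q⁻¹ + C * (t - a)) ^ q := by
  set c : ℝ := (‖f a‖ + δ) ^ q⁻¹
  have hc : 0 < c := by positivity
  have hbarrier (x : ℝ) :
      HasDerivAt (fun y ↦ (c + C * (y - a)) ^ q - δ) (C * q * (c + C * (x - a)) ^ (q - 1)) x := by
    have hlinear : HasDerivAt (fun y ↦ c + C * (y - a)) C x := by
      simpa using (((hasDerivAt_id x).sub_const a).const_mul C).const_add c
    exact (hlinear.rpow_const (.inr hpq.symm.lt.le)).sub_const δ
  have hinitial : ‖f a‖ ≤ (c + C * (a - a)) ^ q - δ := by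
    rw [sub_self, mul_zero, add_zero, Real.rpow_inv_rpow (by positivity) hpq.symm.ne_zero,
      add_sub_cancel_right]
  refine le_sub_iff_add_le.mp <|
    image_norm_le_of_norm_deriv_right_lt_deriv_boundary hf hf' hinitial hbarrier
      (fun x hx hfx ↦ ?_) ht
  have hpos : 0 < c + C * (x - a) :=
    add_pos_of_pos_of_nonneg hc (mul_nonneg hC.le (sub_nonneg.mpr hx.1))
  have hexponent : q * p⁻¹ = q - 1 := by
    rw [← div_eq_mul_inv, hpq.symm.div_conj_eq_sub_one]
  calc ‖f' x‖ ≤ C * (‖f x‖ + δ) ^ p⁻¹ := bound x hx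
    _ = C * (c + C * (x - a)) ^ (q - 1) := by
      rw [hfx, sub_add_cancel, ← Real.rpow_mul hpos.le, hexponent]
    _ < C * q * (c + C * (x - a)) ^ (q - 1) := by
      gcongr
      exact lt_mul_of_one_lt_right hC hpq.symm.lt

theorem norm_add_const_le_rpow_of_norm_hasFDerivWithin_rpow_le {p q : ℝ}
    (hpq : p.HolderConjugate q) {f : E → V} {f' : E → E →L[ℝ] V} {s : Set E} {K δ : ℝ}
    (hK : 0 < K) (hδ : 0 < δ) (hf : ∀ x ∈ s, HasFDerivWithinAt f (f' x) s x)
    (bound : ∀ x ∈ s, ‖f' x‖ ^ p ≤ K * (‖f x‖ + δ)) (hs : Convex ℝ s) {x y : E}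
    (hx : x ∈ s) (hy : y ∈ s) :
    ‖f y‖ + δ ≤ ((‖f x‖ + δ) ^ q⁻¹ + K ^ p⁻¹ * ‖y - x‖) ^ q := by
  rcases eq_or_ne x y with rfl | hxy
  · rw [sub_self, norm_zero, mul_zero, add_zero,
      Real.rpow_inv_rpow (by positivity) hpq.symm.ne_zero]
  have hlength : 0 < ‖y - x‖ := norm_sub_pos_iff.mpr hxy.symm
  let γ : ℝ → E := AffineMap.lineMap x y
  have hγs : MapsTo γ (Icc 0 1) s := hs.mapsTo_lineMap hx hy
  have hderiv : ∀ t ∈ Icc (0 : ℝ) 1,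
      HasDerivWithinAt (f ∘ γ) (f' (γ t) (y - x)) (Icc 0 1) t := fun t ht ↦
    (hf (γ t) (hγs ht)).comp_hasDerivWithinAt t AffineMap.hasDerivWithinAt_lineMap hγs
  have hspeed : ∀ t ∈ Ico (0 : ℝ) 1,
      ‖f' (γ t) (y - x)‖ ≤ K ^ p⁻¹ * ‖y - x‖ * (‖(f ∘ γ) t‖ + δ) ^ p⁻¹ := fun t ht ↦ by
    have hnorm : ‖f' (γ t)‖ ≤ (K * (‖f (γ t)‖ + δ)) ^ p⁻¹ :=
      (Real.le_rpow_inv_iff_of_pos (norm_nonneg _) (by positivity) hpq.pos).mpr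
        (bound _ (hγs (Ico_subset_Icc_self ht)))
    calc ‖f' (γ t) (y - x)‖ ≤ (K * (‖f (γ t)‖ + δ)) ^ p⁻¹ * ‖y - x‖ :=
          ContinuousLinearMap.le_of_opNorm_le _ hnorm _
      _ = K ^ p⁻¹ * ‖y - x‖ * (‖(f ∘ γ) t‖ + δ) ^ p⁻¹ := by
          rw [Real.mul_rpow hK.le (by positivity), mul_right_comm, Function.comp_apply]
  simpa [γ] using norm_add_const_le_rpow_of_norm_deriv_right_le hpq (by positivity) hδ
    (fun t ht ↦ (hderiv t ht).continuousWithinAt)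
    (fun t ht ↦ (hderiv t (Ico_subset_Icc_self ht)).mono_of_mem_nhdsWithin
      (Icc_mem_nhdsGE_of_mem ht))
    hspeed (right_mem_Icc.mpr zero_le_one)

theorem remark_polynomial_growth_general (F : E → V) (hF : Differentiable ℝ F)
    (C₃ C₄ r : ℝ) (hC₃ : 0 < C₃) (hC₄ : 0 ≤ C₄) (hr : 1 < r)
    (hgrowth : ∀ x, ‖fderiv ℝ F x‖ ^ r ≤ C₃ * ‖F x‖ + C₄) :
    ∃ C₅ C₆ : ℝ, 0 < C₅ ∧ 0 ≤ C₆ ∧ ∀ x, ‖F x‖ ≤ C₅ * ‖x‖ ^ (r / (r - 1)) + C₆ := by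
  set q : ℝ := r / (r - 1)
  have hrq : r.HolderConjugate q := .conjExponent hr
  set K : ℝ := C₃ + C₄
  have hK : 0 < K := by positivity
  have bound (x : E) : ‖fderiv ℝ F x‖ ^ r ≤ K * (‖F x‖ + 1) := by
    linarith [hgrowth x, mul_nonneg hC₄ (norm_nonneg (F x))]
  refine ⟨2 ^ (q - 1) * (K ^ r⁻¹) ^ q, 2 ^ (q - 1) * (‖F 0‖ + 1), by positivity, by positivity,
    fun x ↦ ?_⟩
  calc ‖F x‖ ≤ ‖F x‖ + 1 := le_add_of_nonneg_right zero_le_one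
    _ ≤ ((‖F 0‖ + 1) ^ q⁻¹ + K ^ r⁻¹ * ‖x‖) ^ q := by
      simpa only [sub_zero] using
        norm_add_const_le_rpow_of_norm_hasFDerivWithin_rpow_le hrq hK one_pos
          (fun x _ ↦ (hF x).hasFDerivAt.hasFDerivWithinAt) (fun x _ ↦ bound x) convex_univ
          (mem_univ 0) (mem_univ x)
    _ ≤ 2 ^ (q - 1) * (((‖F 0‖ + 1) ^ q⁻¹) ^ q + (K ^ r⁻¹ * ‖x‖) ^ q) :=
      add_rpow_le_two_rpow_mul_rpow_add_rpow (by positivity) (by positivity) hrq.symm.lt.le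
    _ = 2 ^ (q - 1) * (K ^ r⁻¹) ^ q * ‖x‖ ^ q + 2 ^ (q - 1) * (‖F 0‖ + 1) := by
      rw [Real.rpow_inv_rpow (by positivity) hrq.symm.ne_zero,
        Real.mul_rpow (by positivity) (norm_nonneg x)]
      ring

/-- Remark 2.4 of the paper: if `F : ℝ → ℝ` is differentiable and bounded from below,
and satisfies `|F'(s)|^r ≤ C₃ |F(s)| + C₄` for some `C₃ > 0`, `C₄ ≥ 0`, `r ∈ (1,2]`,
then `F` has polynomial growth of order `r' = r/(r-1)`:
there exist `C₅ > 0`, `C₆ ≥ 0` with `|F(s)| ≤ C₅ |s|^{r'} + C₆` for all `s`. -/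
theorem remark_polynomial_growth
    (F : ℝ → ℝ) (hF : Differentiable ℝ F)
    (hbdd : BddBelow (Set.range F))
    (C₃ C₄ r : ℝ) (hC₃ : 0 < C₃) (hC₄ : 0 ≤ C₄) (hr1 : 1 < r) (hr2 : r ≤ 2)
    (hgrowth : ∀ s : ℝ, |deriv F s| ^ r ≤ C₃ * |F s| + C₄) :
    ∃ C₅ C₆ : ℝ, 0 < C₅ ∧ 0 ≤ C₆ ∧
      ∀ s : ℝ, |F s| ≤ C₅ * |s| ^ (r / (r - 1)) + C₆ :=
  remark_polynomial_growth_general F hF C₃ C₄ r hC₃ hC₄ hr1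
    (by simpa only [← norm_deriv_eq_norm_fderiv, Real.norm_eq_abs] using hgrowth)
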